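/- Let A be the N×N complex circulant matrix associated with the second Ding–Helleseth sequence. Then det(A) = (p−1)^q·((q+1)/2)^p·((q−1)/4)^{p(q−1)/2} if q ≡ 1 (mod 4), and det(A) = (p−1)^q·((q+1)/2)^p·((q+1)/4)^{p(q−1)/2} if q ≡ 3 (mod 4). -/

import Mathlib

/-!
Under the Chinese remainder isomorphism `ZMod (p * q) ≃ ZMod p × ZMod q`, the class `D₁` consists
of the pairs `(a, b)` with `a ≠ 0` and `b` a quadratic nonresidue, while `Q` consists of the pairs
`(a, 0)` with `a ≠ 0`. Hence the support of the sequence is the product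
`{a ≠ 0} × {b = 0 or b a nonresidue}` (`mem_support_iff`), and after reindexing the matrix `A`
is the Kronecker product of two circulants, of sizes `p` and `q`. So
`det A = (det B) ^ q * (det C) ^ p` (`det_DHA2`).

Both determinants follow from the discrete Fourier transform (`det_circulant_zmod`).
The eigenvalues of `B` are `p - 1`, once, and `-1`, `p - 1` times
(`det_circulant_ne_zero`). The eigenvalues of `C` are `(q + 1) / 2` and `(1 - χ(-k) G) / 2` for
`k ≠ 0`, where `χ` is the quadratic character and `G` its Gauss sum. The signs `χ(-k)` take each
value equally often, so the latter multiply to `((1 - G ^ 2) / 4) ^ ((q - 1) / 2)` with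
`G ^ 2 = χ(-1) q` (`det_circulant_nonresidue`).
-/

open Finset

/-- `ξ_N = exp(2πi/N)`, a primitive `N`-th root of unity. -/
noncomputable def DHxi (N : ℕ) : ℂ := Complex.exp (2 * Real.pi * Complex.I / N)

/-- Gauss period: `Σ_{a ∈ D} ξ_N^a`. -/
noncomputable def DHeta (N : ℕ) (D : Finset (ZMod N)) : ℂ := ∑ a ∈ D, DHxi N ^ a.val

/-- Ding–Helleseth generalized cyclotomic class
`D₀ = {g^(2t) x^i : 0 ≤ t ≤ e/2 - 1, i ∈ {0,1}}` in `ZMod (p*q)`, where `e = (p-1)(q-1)/2`. -/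
def DHD0 (p q g x : ℕ) : Finset (ZMod (p * q)) :=
  (Finset.range ((p - 1) * (q - 1) / 4) ×ˢ Finset.range 2).image
    (fun ti => (g : ZMod (p * q)) ^ (2 * ti.1) * (x : ZMod (p * q)) ^ ti.2)

/-- `D₁ = g · D₀`. -/
def DHD1 (p q g x : ℕ) : Finset (ZMod (p * q)) :=
  (DHD0 p q g x).image (fun d => (g : ZMod (p * q)) * d)

/-- `P = {p, 2p, …, (q-1)p}` as a subset of `ZMod (p*q)`. -/
def DHP (p q : ℕ) : Finset (ZMod (p * q)) :=
  (Finset.Icc 1 (q - 1)).image (fun k => ((k * p : ℕ) : ZMod (p * q)))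

/-- `Q = {q, 2q, …, (p-1)q}` as a subset of `ZMod (p*q)`. -/
def DHQ (p q : ℕ) : Finset (ZMod (p * q)) :=
  (Finset.Icc 1 (p - 1)).image (fun k => ((k * q : ℕ) : ZMod (p * q)))

/-- First Ding–Helleseth sequence: `s_i = 1` iff `i mod N ∈ D₁ ∪ P`. -/
def DHs1 (p q g x : ℕ) (i : ℕ) : ℕ :=
  if (i : ZMod (p * q)) ∈ DHD1 p q g x ∪ DHP p q then 1 else 0

/-- Second Ding–Helleseth sequence: `s_i = 1` iff `i mod N ∈ D₁ ∪ Q`. -/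
def DHs2 (p q g x : ℕ) (i : ℕ) : ℕ :=
  if (i : ZMod (p * q)) ∈ DHD1 p q g x ∪ DHQ p q then 1 else 0

/-- Circulant matrix of the first sequence: `a_{i,j} = s_{(i-j) mod N}`. -/
noncomputable def DHA1 (p q g x : ℕ) : Matrix (Fin (p * q)) (Fin (p * q)) ℂ :=
  fun i j => (DHs1 p q g x ((((i : ℕ) : ZMod (p * q)) - ((j : ℕ) : ZMod (p * q))).val) : ℂ)

/-- Circulant matrix of the second sequence: `a_{i,j} = s_{(i-j) mod N}`. -/
noncomputable def DHA2 (p q g x : ℕ) : Matrix (Fin (p * q)) (Fin (p * q)) ℂ :=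
  fun i j => (DHs2 p q g x ((((i : ℕ) : ZMod (p * q)) - ((j : ℕ) : ZMod (p * q))).val) : ℂ)

/-- `S(z) = Σ_{i=0}^{N-1} s_i z^i` for the first sequence. -/
noncomputable def DHSval1 (p q g x : ℕ) (z : ℂ) : ℂ :=
  ∑ i ∈ Finset.range (p * q), (DHs1 p q g x i : ℂ) * z ^ i

/-- `S(z) = Σ_{i=0}^{N-1} s_i z^i` for the second sequence. -/
noncomputable def DHSval2 (p q g x : ℕ) (z : ℂ) : ℂ :=
  ∑ i ∈ Finset.range (p * q), (DHs2 p q g x i : ℂ) * z ^ i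

/-- `S(2) = Σ_{i=0}^{N-1} s_i 2^i` for the first sequence, as a natural number. -/
def DHS2num1 (p q g x : ℕ) : ℕ := ∑ i ∈ Finset.range (p * q), DHs1 p q g x i * 2 ^ i

/-- `S(2) = Σ_{i=0}^{N-1} s_i 2^i` for the second sequence, as a natural number. -/
def DHS2num2 (p q g x : ℕ) : ℕ := ∑ i ∈ Finset.range (p * q), DHs2 p q g x i * 2 ^ i

/-- Nonzero quadratic residues modulo `q`. -/
def DHQR (q : ℕ) [NeZero q] : Finset (ZMod q) :=
  Finset.univ.filter (fun a => a ≠ 0 ∧ ∃ b : ZMod q, b * b = a)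

/-- Quadratic nonresidues modulo `q`. -/
def DHQNR (q : ℕ) [NeZero q] : Finset (ZMod q) :=
  Finset.univ.filter (fun a => a ≠ 0 ∧ ¬∃ b : ZMod q, b * b = a)

/-- The Fourier matrix diagonalises every circulant: its determinant is the product of the values
of the discrete Fourier transform of `c`. -/
theorem det_circulant_zmod (n : ℕ) [NeZero n] (c : ZMod n → ℂ) :
    (Matrix.circulant c).det =
      ∏ k : ZMod n, ∑ m : ZMod n, c m * ZMod.stdAddChar (-(m * k)) := by
  set F : Matrix (ZMod n) (ZMod n) ℂ := Matrix.of fun j k => ZMod.stdAddChar (j * k) with hF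
  set F' : Matrix (ZMod n) (ZMod n) ℂ := Matrix.of fun k j => ZMod.stdAddChar (-(k * j)) with hF'
  have hinv : F * F' = (n : ℂ) • (1 : Matrix (ZMod n) (ZMod n) ℂ) := by
    ext i j
    have h := AddChar.sum_mulShift (i - j) (ZMod.isPrimitive_stdAddChar n)
    rw [Matrix.mul_apply, Matrix.smul_apply, Matrix.one_apply]
    calc ∑ k, F i k * F' k j = ∑ k : ZMod n, ZMod.stdAddChar (k * (i - j)) := by
          refine Finset.sum_congr rfl fun k _ => ?_
          simp only [hF, hF', Matrix.of_apply, ← AddChar.map_add_eq_mul]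
          congr 1; ring
      _ = _ := by
          rw [h]
          by_cases hij : i = j <;> simp [hij, sub_eq_zero]
  -- `F` intertwines `circulant c` with a diagonal matrix, so it only has to be invertible.
  have hdet : F.det ≠ 0 := by
    intro h0
    have := congrArg Matrix.det hinv
    rw [Matrix.det_mul, h0, zero_mul, Matrix.det_smul, Matrix.det_one, mul_one] at this
    exact pow_ne_zero _ (Nat.cast_ne_zero.mpr (NeZero.ne n)) this.symm
  have hcomm : Matrix.circulant c * F =
      F * Matrix.diagonal fun k => ∑ m : ZMod n, c m * ZMod.stdAddChar (-(m * k)) := by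
    ext i k
    rw [Matrix.mul_diagonal, Matrix.mul_apply, Finset.mul_sum]
    refine Fintype.sum_equiv (Equiv.subLeft i) _ _ fun j => ?_
    simp only [hF, Matrix.of_apply, Matrix.circulant_apply, Equiv.subLeft_apply]
    rw [mul_left_comm, ← AddChar.map_add_eq_mul]
    congr 2; ring
  have := congrArg Matrix.det hcomm
  rw [Matrix.det_mul, Matrix.det_mul, Matrix.det_diagonal, mul_comm] at this
  exact mul_left_cancel₀ hdet this

theorem det_circulant_ne_zero (p : ℕ) [NeZero p] (hpo : Odd p) :
    (Matrix.circulant fun a : ZMod p => if a ≠ 0 then (1 : ℂ) else 0).det = (p : ℂ) - 1 := by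
  have hev : ∀ k : ZMod p,
      ∑ m : ZMod p, (if m ≠ 0 then (1 : ℂ) else 0) * ZMod.stdAddChar (-(m * k)) =
        if k = 0 then (p : ℂ) - 1 else -1 := by
    intro k
    have h := AddChar.sum_mulShift (-k) (ZMod.isPrimitive_stdAddChar p)
    have h1 : ∀ m : ZMod p, (if m ≠ 0 then (1 : ℂ) else 0) * ZMod.stdAddChar (-(m * k)) =
        ZMod.stdAddChar (m * -k) - if m = 0 then 1 else 0 := by
      intro m
      by_cases hm : m = 0 <;> simp [hm]
    rw [Finset.sum_congr rfl fun m _ => h1 m, Finset.sum_sub_distrib, h]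
    by_cases hk : k = 0 <;> simp [hk]
  have heven : Even (p - 1) := Nat.Odd.sub_odd hpo odd_one
  rw [det_circulant_zmod, Finset.prod_congr rfl fun k _ => hev k,
    ← Finset.mul_prod_erase _ _ (Finset.mem_univ (0 : ZMod p)),
    Finset.prod_congr rfl fun k hk => if_neg (Finset.ne_of_mem_erase hk)]
  simp [Finset.card_erase_of_mem, heven.neg_one_pow]

/-- Among the nonzero residues modulo `q`, the quadratic character takes the values `1` and `-1`
`(q - 1) / 2` times each, because its values sum to zero. -/
theorem prod_quadraticChar (q : ℕ) [Fact q.Prime] (hqo : Odd q) (f : ℤ → ℂ) :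
    ∏ k ∈ Finset.univ.erase (0 : ZMod q), f (quadraticChar (ZMod q) k) =
      (f 1 * f (-1)) ^ ((q - 1) / 2) := by
  classical
  set S := Finset.univ.erase (0 : ZMod q) with hS
  have hq2 : ringChar (ZMod q) ≠ 2 := by
    rw [ZMod.ringChar_zmod_n]; rintro rfl; exact absurd hqo (by decide)
  have hval : ∀ k ∈ S, quadraticChar (ZMod q) k = 1 ∨ quadraticChar (ZMod q) k = -1 :=
    fun k hk => quadraticChar_dichotomy (Finset.ne_of_mem_erase hk)
  have hneg : ∀ k ∈ S.filter (fun k => ¬ quadraticChar (ZMod q) k = 1),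
      quadraticChar (ZMod q) k = -1 := fun k hk =>
    (hval k (Finset.mem_filter.mp hk).1).resolve_left (Finset.mem_filter.mp hk).2
  have hpos : ∀ k ∈ S.filter (fun k => quadraticChar (ZMod q) k = 1),
      quadraticChar (ZMod q) k = 1 := fun k hk => (Finset.mem_filter.mp hk).2
  have hcard := Finset.card_filter_add_card_filter_not (s := S)
    (fun k => quadraticChar (ZMod q) k = 1)
  have hS' : S.card = q - 1 := by simp [hS, Finset.card_erase_of_mem]
  have hsum := quadraticChar_sum_zero hq2
  rw [← Finset.add_sum_erase _ _ (Finset.mem_univ (0 : ZMod q)), quadraticChar_zero, zero_add, ← hS,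
    ← Finset.sum_filter_add_sum_filter_not S (fun k => quadraticChar (ZMod q) k = 1),
    Finset.sum_congr rfl hpos, Finset.sum_congr rfl hneg] at hsum
  simp only [Finset.sum_const, mul_one, nsmul_eq_mul, mul_neg] at hsum
  rw [← Finset.prod_filter_mul_prod_filter_not S (fun k => quadraticChar (ZMod q) k = 1),
    Finset.prod_congr rfl fun k hk => congrArg f (hpos k hk),
    Finset.prod_congr rfl fun k hk => congrArg f (hneg k hk), Finset.prod_const,
    Finset.prod_const, mul_pow]
  congr 2 <;> omega

/-- The determinant of the `q × q` factor. The indicator function of `{0} ∪ {nonresidues}` is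
`(1 + δ₀ - χ) / 2`, so its Fourier transform is expressed through the quadratic Gauss sum. -/
theorem det_circulant_nonresidue (q : ℕ) [Fact q.Prime] (hqo : Odd q) :
    (Matrix.circulant fun b : ZMod q =>
      if b = 0 ∨ quadraticChar (ZMod q) b = -1 then (1 : ℂ) else 0).det =
      ((q : ℂ) + 1) / 2 *
        ((1 - (quadraticChar (ZMod q) (-1) : ℂ) * q) / 4) ^ ((q - 1) / 2) := by
  have hq2 : ringChar (ZMod q) ≠ 2 := by
    rw [ZMod.ringChar_zmod_n]; rintro rfl; exact absurd hqo (by decide)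
  set χ : MulChar (ZMod q) ℂ := (quadraticChar (ZMod q)).ringHomComp (Int.castRingHom ℂ) with hχ
  have hχa : ∀ a, χ a = (quadraticChar (ZMod q) a : ℂ) := fun a => rfl
  have hψ := ZMod.isPrimitive_stdAddChar q
  set ψ : AddChar (ZMod q) ℂ := ZMod.stdAddChar with hψdef
  have hχ1 : χ ≠ 1 := (MulChar.ringHomComp_ne_one_iff (Int.cast_injective)).mpr
    (quadraticChar_ne_one hq2)
  have hχ2 : χ.IsQuadratic := (quadraticChar_isQuadratic (ZMod q)).comp _
  have hG := gaussSum_sq hχ1 hχ2 hψ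
  set G := gaussSum χ ψ with hGdef
  set ε : ℂ := (quadraticChar (ZMod q) (-1) : ℂ) with hε
  rw [hχa, ZMod.card, ← hε] at hG
  have hε2 : ε * ε = 1 := by
    rw [hε]
    rcases quadraticChar_dichotomy (neg_ne_zero.mpr (one_ne_zero (α := ZMod q))) with h | h <;>
      simp [h]
  -- The case `k = 0` holds too: both sides vanish.
  have hshift : ∀ k : ZMod q, ∑ m : ZMod q, χ m * ψ (m * -k) = ε * χ k * G := by
    intro k
    by_cases hk : k = 0
    · have := MulChar.sum_eq_zero_of_ne_one hχ1
      simp [hk, this, MulChar.map_zero]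
    · have h := gaussSum_mulShift χ ψ (Units.mk0 (-k) (neg_ne_zero.mpr hk))
      have h' : gaussSum χ (AddChar.mulShift ψ (-k)) = ∑ m : ZMod q, χ m * ψ (m * -k) := by
        simp only [gaussSum, AddChar.mulShift_apply, mul_comm]
      rw [Units.val_mk0, h'] at h
      have hk2 : χ (-k) = ε * χ k := by
        rw [← neg_one_mul, map_mul, hχa (-1)]
      have hkk : χ k * χ k = 1 := by
        rw [hχa]
        rcases quadraticChar_dichotomy hk with h | h <;> simp [h]
      rw [hk2] at h
      linear_combination ε * χ k * h - (∑ m : ZMod q, χ m * ψ (m * -k)) * (ε * ε * hkk + hε2)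
  have hev : ∀ k : ZMod q,
      ∑ m : ZMod q, (if m = 0 ∨ quadraticChar (ZMod q) m = -1 then (1 : ℂ) else 0) *
        ψ (-(m * k)) =
        ((if k = 0 then (q : ℂ) else 0) + 1 - ε * χ k * G) / 2 := by
    intro k
    have h := AddChar.sum_mulShift (-k) hψ
    have h1 : ∀ m : ZMod q, (if m = 0 ∨ quadraticChar (ZMod q) m = -1 then (1 : ℂ) else 0) *
        ψ (-(m * k)) =
        (ψ (m * -k) + (if m = 0 then 1 else 0) - χ m * ψ (m * -k)) / 2 := by
      intro m
      rw [hχa]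
      by_cases hm : m = 0
      · simp [hm]
      · rcases quadraticChar_dichotomy hm with h | h
        · simp [hm, h]
        · simp [hm, h]
    rw [Finset.sum_congr rfl fun m _ => h1 m, ← Finset.sum_div, Finset.sum_sub_distrib,
      Finset.sum_add_distrib, h, hshift]
    by_cases hk : k = 0 <;> simp [hk]
  rw [det_circulant_zmod, Finset.prod_congr rfl fun k _ => hev k,
    ← Finset.mul_prod_erase _ _ (Finset.mem_univ (0 : ZMod q)),
    Finset.prod_congr rfl fun k hk => by rw [if_neg (Finset.ne_of_mem_erase hk), hχa],
    prod_quadraticChar q hqo fun n => (0 + 1 - ε * (n : ℂ) * G) / 2]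
  congr 1
  · simp [MulChar.map_zero]
  · congr 1
    push_cast
    linear_combination (-hG - hε2 * G ^ 2) / 4

theorem exists_pow_of_orderOf (p g : ℕ) [Fact p.Prime] (hg : orderOf (g : ZMod p) = p - 1)
    (a : ZMod p) (ha : a ≠ 0) : ∃ i : ℕ, (g : ZMod p) ^ i = a := by
  have hpr : IsPrimitiveRoot (g : ZMod p) (p - 1) := hg ▸ IsPrimitiveRoot.orderOf _
  have : NeZero (p - 1) := ⟨by have := (Fact.out : p.Prime).two_le; omega⟩
  obtain ⟨i, -, hi⟩ := hpr.eq_pow_of_pow_eq_one (ZMod.pow_card_sub_one_eq_one ha)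
  exact ⟨i, hi⟩

theorem natCast_ne_zero_of_orderOf (p g : ℕ) [Fact p.Prime] (hg : orderOf (g : ZMod p) = p - 1) :
    (g : ZMod p) ≠ 0 := by
  intro h
  have := (Fact.out : p.Prime).two_le
  rw [h, orderOf_zero] at hg
  omega

theorem quadraticChar_of_orderOf (q g : ℕ) [Fact q.Prime] (hqo : Odd q)
    (hg : orderOf (g : ZMod q) = q - 1) : quadraticChar (ZMod q) (g : ZMod q) = -1 := by
  have hq2 : ringChar (ZMod q) ≠ 2 := by
    rw [ZMod.ringChar_zmod_n]; rintro rfl; exact absurd hqo (by decide)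
  refine (quadraticChar_dichotomy (natCast_ne_zero_of_orderOf q g hg)).resolve_left fun h1 => ?_
  obtain ⟨a, ha⟩ := quadraticChar_exists_neg_one hq2
  have ha0 : a ≠ 0 := by rintro rfl; simp at ha
  obtain ⟨i, rfl⟩ := exists_pow_of_orderOf q g hg a ha0
  rw [map_pow, h1, one_pow] at ha
  norm_num at ha

/-- In Chinese remainder coordinates the support `D₁ ∪ Q` is a product set. A unit
`(g ^ r, g ^ m)` with `m` odd is written as `g * (g ^ (2 * t) * x ^ i)` by taking `i` from the
parity of `r` and solving two congruences for `t`, modulo the coprime numbers `(p - 1) / 2` and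
`(q - 1) / 2`. -/
theorem mem_support_iff (p q g x : ℕ) [Fact p.Prime] [Fact q.Prime]
    (hpo : Odd p) (hqo : Odd q) (hpq : p < q)
    (hgcd : Nat.gcd (p - 1) (q - 1) = 2)
    (hgp : orderOf (g : ZMod p) = p - 1) (hgq : orderOf (g : ZMod q) = q - 1)
    (hxp : (x : ZMod p) = (g : ZMod p)) (hxq : (x : ZMod q) = 1)
    (φ : ZMod (p * q) ≃+* ZMod p × ZMod q) (z : ZMod (p * q)) :
    z ∈ DHD1 p q g x ∪ DHQ p q ↔
      (φ z).1 ≠ 0 ∧ ((φ z).2 = 0 ∨ quadraticChar (ZMod q) (φ z).2 = -1) := by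
  have hp : p.Prime := Fact.out
  have hq : q.Prime := Fact.out
  have hg0 := natCast_ne_zero_of_orderOf p g hgp
  have hχg := quadraticChar_of_orderOf q g hqo hgq
  have hqp : (q : ZMod p) ≠ 0 := by
    rw [Ne, ZMod.natCast_eq_zero_iff, Nat.prime_dvd_prime_iff_eq hp hq]
    exact hpq.ne
  have hφD : ∀ t i : ℕ, φ ((g : ZMod (p * q)) * ((g : ZMod (p * q)) ^ (2 * t) *
      (x : ZMod (p * q)) ^ i)) =
      ((g : ZMod p) ^ (2 * t + 1 + i), (g : ZMod q) ^ (2 * t + 1)) := by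
    intro t i
    ext
    · simp only [map_mul, map_pow, map_natCast, Prod.fst_mul, Prod.pow_fst, Prod.fst_natCast, hxp]
      ring
    · simp only [map_mul, map_pow, map_natCast, Prod.snd_mul, Prod.pow_snd, Prod.snd_natCast, hxq]
      ring
  have hφQ : ∀ k : ℕ, φ ((k * q : ℕ) : ZMod (p * q)) = ((k : ZMod p) * q, 0) := by
    intro k
    ext <;> simp
  obtain ⟨a, ha⟩ := hpo
  obtain ⟨b, hb⟩ := hqo
  have ha2 : p - 1 = 2 * a := by omega
  have hb2 : q - 1 = 2 * b := by omega
  have hab : Nat.Coprime a b := by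
    rw [ha2, hb2, Nat.gcd_mul_left] at hgcd
    exact Nat.eq_of_mul_eq_mul_left two_pos (by simpa using hgcd)
  have ha0 : a ≠ 0 := by have := hp.one_lt; omega
  have hb0 : b ≠ 0 := by have := hq.one_lt; omega
  have he : (p - 1) * (q - 1) / 4 = a * b := by
    rw [ha2, hb2, show 2 * a * (2 * b) = 4 * (a * b) by ring, Nat.mul_div_cancel_left _ four_pos]
  simp only [DHD1, DHD0, DHQ, Finset.mem_union, Finset.mem_image, Finset.mem_product,
    Finset.mem_range, Finset.mem_Icc, he]
  constructor
  · rintro (⟨d, ⟨⟨t, i⟩, -, rfl⟩, rfl⟩ | ⟨k, ⟨hk1, hk2⟩, rfl⟩)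
    · rw [hφD]
      refine ⟨pow_ne_zero _ hg0, Or.inr ?_⟩
      rw [map_pow, hχg, Odd.neg_one_pow ⟨t, rfl⟩]
    · rw [hφQ]
      refine ⟨mul_ne_zero ?_ hqp, Or.inl rfl⟩
      rw [Ne, ZMod.natCast_eq_zero_iff]
      intro h
      have := Nat.le_of_dvd hk1 h
      omega
  · rintro ⟨h1, h2⟩
    by_cases h20 : (φ z).2 = 0
    · right
      refine ⟨((φ z).1 / (q : ZMod p)).val, ⟨?_, ?_⟩, φ.injective ?_⟩
      · rw [Nat.one_le_iff_ne_zero, Ne, ZMod.val_eq_zero]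
        exact div_ne_zero h1 hqp
      · have := ZMod.val_lt ((φ z).1 / (q : ZMod p))
        omega
      · rw [hφQ, ZMod.natCast_zmod_val, div_mul_cancel₀ _ hqp, ← h20]
    · left
      obtain ⟨r, hr⟩ := exists_pow_of_orderOf p g hgp _ h1
      obtain ⟨m, hm⟩ := exists_pow_of_orderOf q g hgq _ h20
      have hmodd : Odd m := by
        have h := h2.resolve_left h20
        rw [← hm, map_pow, hχg] at h
        by_contra hne
        rw [Nat.not_odd_iff_even] at hne
        rw [hne.neg_one_pow] at h
        norm_num at h
      obtain ⟨n, rfl⟩ := hmodd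
      -- Adding the period `2 * a` makes the exponent positive; write it as `2 * s + 1 + i`.
      obtain ⟨s, i, hi, hs⟩ : ∃ s i, i < 2 ∧ r + 2 * a = 2 * s + 1 + i :=
        ⟨(r + 2 * a - 1) / 2, (r + 2 * a - 1) % 2, Nat.mod_lt _ two_pos, by omega⟩
      have hr' : (g : ZMod p) ^ (2 * s + 1 + i) = (φ z).1 := by
        rw [← hs, pow_add, ← ha2, ← hgp, pow_orderOf_eq_one, mul_one, hr]
      set t := Nat.chineseRemainder hab s n with ht
      have hta : 2 * (t : ℕ) ≡ 2 * s [MOD 2 * a] := t.2.1.mul_left' 2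
      have htb : 2 * (t : ℕ) ≡ 2 * n [MOD 2 * b] := t.2.2.mul_left' 2
      rw [← ha2, ← hgp] at hta
      rw [← hb2, ← hgq] at htb
      refine ⟨_, ⟨((t : ℕ), i), ⟨Nat.chineseRemainder_lt_mul hab s n ha0 hb0, hi⟩, rfl⟩,
        φ.injective ?_⟩
      refine (hφD _ _).trans (Prod.ext ?_ ?_)
      · change (g : ZMod p) ^ (2 * (t : ℕ) + 1 + i) = _
        rw [← hr', add_assoc, add_assoc, pow_add, pow_add (g : ZMod p) (2 * s),
          pow_eq_pow_of_modEq hta (pow_orderOf_eq_one _)]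
      · change (g : ZMod q) ^ (2 * (t : ℕ) + 1) = _
        rw [← hm, pow_add, pow_add (g : ZMod q) (2 * n),
          pow_eq_pow_of_modEq htb (pow_orderOf_eq_one _)]

/-- The determinant in a form uniform in `q` modulo `4`: the sign `χ(-1)` is the only place where
the residue of `q` enters. -/
theorem det_DHA2 (p q g x : ℕ) [Fact p.Prime] [Fact q.Prime]
    (hpo : Odd p) (hqo : Odd q) (hpq : p < q)
    (hgcd : Nat.gcd (p - 1) (q - 1) = 2)
    (hgp : orderOf (g : ZMod p) = p - 1) (hgq : orderOf (g : ZMod q) = q - 1)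
    (hxp : (x : ZMod p) = (g : ZMod p)) (hxq : (x : ZMod q) = 1) :
    (DHA2 p q g x).det = ((p : ℂ) - 1) ^ q * (((q : ℂ) + 1) / 2 *
        ((1 - (quadraticChar (ZMod q) (-1) : ℂ) * q) / 4) ^ ((q - 1) / 2)) ^ p := by
  have hcop : p.Coprime q := (Nat.coprime_primes Fact.out Fact.out).mpr hpq.ne
  set φ := ZMod.chineseRemainder hcop with hφ
  let e₀ : Fin (p * q) → ZMod (p * q) := fun i => ((i : ℕ) : ZMod (p * q))
  have he₀ : Function.Bijective e₀ := by
    rw [Fintype.bijective_iff_injective_and_card]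
    refine ⟨fun i j hij => ?_, by rw [Fintype.card_fin, ZMod.card]⟩
    have h := (ZMod.natCast_eq_natCast_iff' _ _ _).mp hij
    rwa [Nat.mod_eq_of_lt i.2, Nat.mod_eq_of_lt j.2, ← Fin.ext_iff] at h
  let e : Fin (p * q) ≃ ZMod p × ZMod q := (Equiv.ofBijective e₀ he₀).trans φ.toEquiv
  -- The entry at `(i, j)` depends only on `i - j`, whose support condition splits.
  have hA : DHA2 p q g x = (Matrix.kroneckerMap (fun u v => u * v)
      (Matrix.circulant fun a : ZMod p => if a ≠ 0 then (1 : ℂ) else 0)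
      (Matrix.circulant fun b : ZMod q =>
        if b = 0 ∨ quadraticChar (ZMod q) b = -1 then (1 : ℂ) else 0)).submatrix e e := by
    ext i j
    have hmem := mem_support_iff p q g x hpo hqo hpq hgcd hgp hgq hxp hxq φ (e₀ i - e₀ j)
    have hei : ∀ i, e i = φ (e₀ i) := fun _ => rfl
    rw [map_sub, Prod.fst_sub, Prod.snd_sub, ← hei, ← hei] at hmem
    simp only [DHA2, DHs2, ZMod.natCast_zmod_val, Matrix.submatrix_apply,
      Matrix.kroneckerMap_apply, Matrix.circulant_apply, ite_zero_mul_ite_zero, mul_one]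
    rw [Nat.cast_ite, Nat.cast_one, Nat.cast_zero]
    exact if_congr hmem rfl rfl
  rw [hA, Matrix.det_submatrix_equiv_self, Matrix.det_kronecker, ZMod.card, ZMod.card,
    det_circulant_ne_zero p hpo, det_circulant_nonresidue q hqo]

theorem stmt2 (p q g x : ℕ) (hp : Nat.Prime p) (hq : Nat.Prime q)
    (hpo : Odd p) (hqo : Odd q) (hpq : p < q)
    (hgcd : Nat.gcd (p - 1) (q - 1) = 2)
    (hgp : orderOf (g : ZMod p) = p - 1) (hgq : orderOf (g : ZMod q) = q - 1)
    (hxp : (x : ZMod p) = (g : ZMod p)) (hxq : (x : ZMod q) = 1) :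
    (q % 4 = 1 → (DHA2 p q g x).det =
      ((p : ℂ) - 1) ^ q * (((q : ℂ) + 1) / 2) ^ p *
        (((q : ℂ) - 1) / 4) ^ (p * (q - 1) / 2)) ∧
    (q % 4 = 3 → (DHA2 p q g x).det =
      ((p : ℂ) - 1) ^ q * (((q : ℂ) + 1) / 2) ^ p *
        (((q : ℂ) + 1) / 4) ^ (p * (q - 1) / 2)) := by
  have := Fact.mk hp
  have := Fact.mk hq
  have hq2 : ringChar (ZMod q) ≠ 2 := by
    rw [ZMod.ringChar_zmod_n]; rintro rfl; exact absurd hqo (by decide)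
  have hε := quadraticChar_neg_one hq2
  rw [ZMod.card] at hε
  have hexp : p * (q - 1) / 2 = (q - 1) / 2 * p := by
    obtain ⟨b, hb⟩ := hqo
    rw [show q - 1 = 2 * b by omega, Nat.mul_div_cancel_left _ two_pos,
      show p * (2 * b) = 2 * (b * p) by ring, Nat.mul_div_cancel_left _ two_pos]
  rw [det_DHA2 p q g x hpo hqo hpq hgcd hgp hgq hxp hxq, hε, hexp, mul_pow, ← pow_mul, ← mul_assoc]
  refine ⟨fun h1 => ?_, fun h3 => ?_⟩
  -- Here the base is `(1 - q) / 4`; the even exponent absorbs its sign.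
  · have heven : Even ((q - 1) / 2 * p) := (Nat.even_iff.mpr (by omega)).mul_right p
    rw [ZMod.χ₄_nat_one_mod_four h1, ← heven.neg_pow]
    congr 2
    push_cast
    ring
  · rw [ZMod.χ₄_nat_three_mod_four h3]
    congr 2
    push_cast
    ring
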